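/- Let α ∈ (0,1], let u be a classical solution of the localized fractional heat equation, let x₀ ∈ B_1^0, and let C₀ ≥ 0. Assume |u(t,x,y) − u(−1,x₀,0)| ≤ C₀ (|x−x₀|² + y^{1−a} + (t+1))^α for all (t,x,y) ∈ ({−1} × closure(B_1^+)) ∪ ([−1,0] × closure((∂B_1)^+)). Then there is a constant C, depending only on α, n and a, such that |u(t,x,y) − u(−1,x₀,0)| ≤ C C₀ (|x−x₀|² + y^{1−a} + (t+1))^{sα/2} for all (t,x,y) ∈ [−1,0] × closure(B_1^+). -/

import Mathlib

open Set Filter Topology MeasureTheory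
open scoped RealInnerProductSpace

noncomputable section

abbrev En (n : ℕ) := EuclideanSpace ℝ (Fin n)

/-- The open upper half ball `B_r^+`. -/
def halfBall (n : ℕ) (r : ℝ) : Set (En n × ℝ) :=
  {p | ‖p.1‖ ^ 2 + p.2 ^ 2 < r ^ 2 ∧ 0 < p.2}

/-- The closure of the upper half ball. -/
def closedHalfBall (n : ℕ) (r : ℝ) : Set (En n × ℝ) :=
  {p | ‖p.1‖ ^ 2 + p.2 ^ 2 ≤ r ^ 2 ∧ 0 ≤ p.2}

/-- `B_r^+ ∪ B_r^0`. -/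
def halfBallWithBase (n : ℕ) (r : ℝ) : Set (En n × ℝ) :=
  {p | ‖p.1‖ ^ 2 + p.2 ^ 2 < r ^ 2 ∧ 0 ≤ p.2}

/-- The flat ball `B_r^0` in `ℝⁿ`. -/
def flatBall (n : ℕ) (r : ℝ) : Set (En n) := {x | ‖x‖ < r}

/-- `(∂B_1)^+`. -/
def spherePlus (n : ℕ) : Set (En n × ℝ) := {p | ‖p.1‖ ^ 2 + p.2 ^ 2 = 1 ∧ 0 < p.2}

/-- closure of `(∂B_1)^+`. -/
def closedSpherePlus (n : ℕ) : Set (En n × ℝ) := {p | ‖p.1‖ ^ 2 + p.2 ^ 2 = 1 ∧ 0 ≤ p.2}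

/-- Second directional derivative of `u` at `p` in direction `v`. -/
def D2 {n : ℕ} (u : En n × ℝ → ℝ) (p v : En n × ℝ) : ℝ :=
  fderiv ℝ (fun q => fderiv ℝ u q v) p v

/-- The Laplacian in the `n+1` variables `(x, y)`. -/
def lap {n : ℕ} (u : En n × ℝ → ℝ) (p : En n × ℝ) : ℝ :=
  (∑ i : Fin n, D2 u p (EuclideanSpace.single i 1, 0)) + D2 u p (0, 1)

/-- `u` is `a`-harmonic on `Ω`: it is `C²` there and `Δu + (a/y) ∂_y u = 0`. -/
def IsAHarmonicOn {n : ℕ} (a : ℝ) (u : En n × ℝ → ℝ) (Ω : Set (En n × ℝ)) : Prop :=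
  ContDiffOn ℝ 2 u Ω ∧ ∀ p ∈ Ω, lap u p + (a / p.2) * fderiv ℝ u p (0, 1) = 0

/-- `lim_{y → 0⁺} y^a ∂_y w(x, y) = L`. -/
def NormalDerivLimit {n : ℕ} (a : ℝ) (w : En n × ℝ → ℝ) (x : En n) (L : ℝ) : Prop :=
  Tendsto (fun y : ℝ => y ^ a * fderiv ℝ w (x, y) (0, 1)) (𝓝[>] (0 : ℝ)) (𝓝 L)

/-- The boundary-restriction `(t, x) ↦ u(t, x, 0)`. -/
def bdryFun {n : ℕ} (u : ℝ → En n × ℝ → ℝ) : ℝ × En n → ℝ := fun q => u q.1 (q.2, 0)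

/-- A classical solution of the extended drift–diffusion equation on
`[-1,0] × closure (B_1^+)` with drift `b` and right-hand side `f`. -/
def IsExtDDSolution {n : ℕ} (a : ℝ) (b : ℝ → En n → En n) (f : ℝ → En n → ℝ)
    (u : ℝ → En n × ℝ → ℝ) : Prop :=
  ContinuousOn (fun q : ℝ × (En n × ℝ) => u q.1 q.2) (Icc (-1 : ℝ) 0 ×ˢ closedHalfBall n 1) ∧
  (∀ t ∈ Icc (-1 : ℝ) 0, IsAHarmonicOn a (u t) (halfBall n 1)) ∧
  (∀ q ∈ Ioc (-1 : ℝ) 0 ×ˢ flatBall n 1,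
      DifferentiableWithinAt ℝ (bdryFun u) (Ioc (-1 : ℝ) 0 ×ˢ flatBall n 1) q) ∧
  (∀ t x, (t, x) ∈ Ioc (-1 : ℝ) 0 ×ˢ flatBall n 1 →
      ∃ L : ℝ, NormalDerivLimit a (u t) x L ∧
        fderivWithin ℝ (bdryFun u) (Ioc (-1 : ℝ) 0 ×ˢ flatBall n 1) (t, x) (1, 0) +
          fderivWithin ℝ (bdryFun u) (Ioc (-1 : ℝ) 0 ×ˢ flatBall n 1) (t, x) (0, b t x) -
          L = f t x)

/-- A classical solution of the localized fractional heat equation on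
`[-1,0] × closure (B_1^+)`. -/
def IsFracHeatSolution {n : ℕ} (a : ℝ) (u : ℝ → En n × ℝ → ℝ) : Prop :=
  ContinuousOn (fun q : ℝ × (En n × ℝ) => u q.1 q.2) (Icc (-1 : ℝ) 0 ×ˢ closedHalfBall n 1) ∧
  (∀ t ∈ Icc (-1 : ℝ) 0, IsAHarmonicOn a (u t) (halfBall n 1)) ∧
  (∀ t ∈ Ioc (-1 : ℝ) 0, ∀ x ∈ flatBall n 1,
      DifferentiableWithinAt ℝ (fun τ => u τ (x, 0)) (Ioc (-1 : ℝ) 0) t ∧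
      NormalDerivLimit a (u t) x (derivWithin (fun τ => u τ (x, 0)) (Ioc (-1 : ℝ) 0) t))

/-!
Let `ψ = |x - x₀|² + (N + 1) y^{2s} - N y² + 2 (N + 1) (t + 1)`. The operator `Δ + (a / y) ∂_y` maps
`|x - x₀|²`, `y^{2s}`, `y²` to `2n`, `0`, `4 (1 - s)`, so a large `N` makes `ψ` a strict
supersolution, while the coefficient of `t + 1` beats the flux `2s (N + 1)` of `y^{2s}` through
`{y = 0}`; moreover `ψ` is comparable with the parabolic size `ρ = |x - x₀|² + y^{2s} + (t + 1)`.
To bound `u` at a point where `ρ = r > 0`, dominate the boundary data by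
`ρ^α ≤ r^α + r^{α - 1} ρ ≤ r^α + r^{α - 1} ψ` and apply the maximum principle to
`± u - C₀ r^{α - 1} ψ`. This yields the exponent `α` itself; smaller exponents follow because `ρ` is
bounded on the cylinder.
-/

section DerivativeTests

lemma deriv_deriv_nonpos_of_isLocalMax {f : ℝ → ℝ} {x : ℝ} (hmax : IsLocalMax f x)
    (hf : ContinuousAt f x) : deriv (deriv f) x ≤ 0 := by
  by_contra! hpos
  have hmin : IsLocalMin f x := isLocalMin_of_deriv_deriv_pos hpos hmax.deriv_eq_zero hf
  have hconst : f =ᶠ[𝓝 x] fun _ ↦ f x := by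
    filter_upwards [hmax, hmin] with r hle hge using le_antisymm hle hge
  simp [hconst.deriv.deriv_eq] at hpos

lemma nonneg_of_hasDerivWithinAt_of_isLocalMaxOn {f : ℝ → ℝ} {d b c : ℝ} {S : Set ℝ}
    (hS : Convex ℝ S) (hb : b ∈ S) (hc : c ∈ S) (hcb : c < b) (hf : HasDerivWithinAt f d S b)
    (hmax : IsLocalMaxOn f S b) : 0 ≤ d := by
  have hle : (c - b) * d ≤ 0 := by
    simpa using hmax.hasFDerivWithinAt_nonpos hf.hasFDerivWithinAt
      (sub_mem_posTangentConeAt_of_segment_subset (hS.segment_subset hb hc))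
  exact nonneg_of_mul_nonpos_right hle (sub_neg.2 hcb)

end DerivativeTests

variable {n : ℕ}

section HalfBall

lemma isOpen_halfBall (n : ℕ) (r : ℝ) : IsOpen (halfBall n r) := by
  have hball : IsOpen {p : En n × ℝ | ‖p.1‖ ^ 2 + p.2 ^ 2 < r ^ 2} :=
    isOpen_lt (by fun_prop) continuous_const
  exact hball.inter (isOpen_lt continuous_const continuous_snd)

lemma isCompact_closedHalfBall (n : ℕ) (r : ℝ) : IsCompact (closedHalfBall n r) := by
  refine Metric.isCompact_of_isClosed_isBounded ?_ ?_
  · have hball : IsClosed {p : En n × ℝ | ‖p.1‖ ^ 2 + p.2 ^ 2 ≤ r ^ 2} :=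
      isClosed_le (by fun_prop) continuous_const
    exact hball.inter (isClosed_le continuous_const continuous_snd)
  · refine (Metric.isBounded_closedBall (x := (0 : En n × ℝ)) (r := |r|)).subset ?_
    rintro ⟨x, y⟩ ⟨hxy, -⟩
    rw [mem_closedBall_zero_iff, Prod.norm_def, sup_le_iff]
    exact ⟨by simpa using sq_le_sq.1 (show ‖x‖ ^ 2 ≤ r ^ 2 by linarith [sq_nonneg y]),
      sq_le_sq.1 (show y ^ 2 ≤ r ^ 2 by linarith [sq_nonneg ‖x‖])⟩

lemma halfBall_subset_closedHalfBall (n : ℕ) (r : ℝ) : halfBall n r ⊆ closedHalfBall n r :=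
  fun _ hp ↦ ⟨hp.1.le, hp.2.le⟩

lemma closedSpherePlus_subset_closedHalfBall (n : ℕ) :
    closedSpherePlus n ⊆ closedHalfBall n 1 :=
  fun _ hp ↦ ⟨by simpa using hp.1.le, hp.2⟩

lemma norm_sq_lt_one_of_mem_flatBall {x : En n} (hx : x ∈ flatBall n 1) : ‖x‖ ^ 2 < 1 :=
  pow_lt_one₀ (norm_nonneg x) hx two_ne_zero

lemma zero_mem_closedHalfBall_of_mem_flatBall {x : En n} (hx : x ∈ flatBall n 1) :
    (x, (0 : ℝ)) ∈ closedHalfBall n 1 :=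
  ⟨by simpa using (norm_sq_lt_one_of_mem_flatBall hx).le, le_rfl⟩

lemma eventually_mem_halfBall {x : En n} (hx : x ∈ flatBall n 1) :
    ∀ᶠ y in 𝓝[>] (0 : ℝ), (x, y) ∈ halfBall n 1 := by
  have hcont : Continuous fun y : ℝ ↦ ‖x‖ ^ 2 + y ^ 2 := by fun_prop
  have hlt : ∀ᶠ y in 𝓝 (0 : ℝ), ‖x‖ ^ 2 + y ^ 2 < 1 ^ 2 :=
    hcont.continuousAt.eventually_lt_const (by simpa using norm_sq_lt_one_of_mem_flatBall hx)
  filter_upwards [nhdsWithin_le_nhds hlt, self_mem_nhdsWithin] with y hy hpos using ⟨hy, hpos⟩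

end HalfBall

section AHarmonicOperator

/-- The `a`-harmonic operator `Δu + (a / y) ∂_y u` at the point `p = (x, y)`; `u` is `a`-harmonic
where it vanishes. -/
def aLap (a : ℝ) (u : En n × ℝ → ℝ) (p : En n × ℝ) : ℝ :=
  lap u p + (a / p.2) * fderiv ℝ u p (0, 1)

variable {u v : En n × ℝ → ℝ} {p : En n × ℝ}

lemma differentiableAt_fderiv_apply (hu : ContDiffAt ℝ 2 u p) (e : En n × ℝ) :
    DifferentiableAt ℝ (fun q ↦ fderiv ℝ u q e) p :=
  ((hu.fderiv_right (m := 1) (by norm_num)).differentiableAt one_ne_zero).clm_apply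
    (differentiableAt_const e)

lemma eventually_differentiableAt_of_contDiffAt (hu : ContDiffAt ℝ 2 u p) :
    ∀ᶠ q in 𝓝 p, DifferentiableAt ℝ u q :=
  (hu.eventually (by simp)).mono fun _ hq ↦ hq.differentiableAt two_ne_zero

lemma deriv_deriv_line (hu : ContDiffAt ℝ 2 u p) (e : En n × ℝ) :
    deriv (deriv fun r : ℝ ↦ u (p + r • e)) 0 = D2 u p e := by
  have hline (r : ℝ) : HasDerivAt (fun r : ℝ ↦ p + r • e) e r := by
    simpa using ((hasDerivAt_id r).smul_const e).const_add p
  have hlim : Tendsto (fun r : ℝ ↦ p + r • e) (𝓝 0) (𝓝 p) := by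
    simpa using (hline 0).continuousAt.tendsto
  have hfirst : deriv (fun r : ℝ ↦ u (p + r • e)) =ᶠ[𝓝 0] fun r ↦ fderiv ℝ u (p + r • e) e := by
    filter_upwards [hlim.eventually (eventually_differentiableAt_of_contDiffAt hu)] with r hr
    exact (hr.hasFDerivAt.comp_hasDerivAt r (hline r)).deriv
  have hsecond : HasFDerivAt (fun q ↦ fderiv ℝ u q e) (fderiv ℝ (fun q ↦ fderiv ℝ u q e) p)
      (p + (0 : ℝ) • e) := by
    simpa using (differentiableAt_fderiv_apply hu e).hasFDerivAt
  rw [hfirst.deriv_eq]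
  exact (hsecond.comp_hasDerivAt 0 (hline 0)).deriv

lemma D2_nonpos_of_isLocalMax (hu : ContDiffAt ℝ 2 u p) (hmax : IsLocalMax u p) (e : En n × ℝ) :
    D2 u p e ≤ 0 := by
  have hline : ContinuousAt (fun r : ℝ ↦ p + r • e) 0 := by fun_prop
  rw [← deriv_deriv_line hu e]
  refine deriv_deriv_nonpos_of_isLocalMax ?_ ?_
  · exact IsLocalMax.comp_continuous (g := fun r : ℝ ↦ p + r • e) (by simpa using hmax) hline
  · exact ContinuousAt.comp (g := u) (by simpa using hu.continuousAt) hline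

lemma aLap_nonpos_of_isLocalMax (a : ℝ) (hu : ContDiffAt ℝ 2 u p) (hmax : IsLocalMax u p) :
    aLap a u p ≤ 0 := by
  have hlap : lap u p ≤ 0 :=
    add_nonpos (Finset.sum_nonpos fun i _ ↦ D2_nonpos_of_isLocalMax hu hmax _)
      (D2_nonpos_of_isLocalMax hu hmax _)
  simpa [aLap, hmax.fderiv_eq_zero] using hlap

lemma fderiv_const_mul_sub_const_mul (hu : DifferentiableAt ℝ u p) (hv : DifferentiableAt ℝ v p)
    (σ M : ℝ) (e : En n × ℝ) :
    fderiv ℝ (fun q ↦ σ * u q - M * v q) p e = σ * fderiv ℝ u p e - M * fderiv ℝ v p e := by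
  have h : HasFDerivAt (fun q ↦ σ * u q - M * v q) (σ • fderiv ℝ u p - M • fderiv ℝ v p) p :=
    (hu.hasFDerivAt.const_mul σ).sub (hv.hasFDerivAt.const_mul M)
  simp [h.fderiv]

lemma D2_const_mul_sub_const_mul (hu : ContDiffAt ℝ 2 u p) (hv : ContDiffAt ℝ 2 v p)
    (σ M : ℝ) (e : En n × ℝ) :
    D2 (fun q ↦ σ * u q - M * v q) p e = σ * D2 u p e - M * D2 v p e := by
  have hfirst : (fun q ↦ fderiv ℝ (fun q ↦ σ * u q - M * v q) q e) =ᶠ[𝓝 p]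
      fun q ↦ σ * fderiv ℝ u q e - M * fderiv ℝ v q e := by
    filter_upwards [eventually_differentiableAt_of_contDiffAt hu,
      eventually_differentiableAt_of_contDiffAt hv] with q huq hvq
    exact fderiv_const_mul_sub_const_mul huq hvq σ M e
  rw [D2, hfirst.fderiv_eq]
  exact fderiv_const_mul_sub_const_mul (differentiableAt_fderiv_apply hu e)
    (differentiableAt_fderiv_apply hv e) σ M e

lemma aLap_const_mul_sub_const_mul (a : ℝ) (hu : ContDiffAt ℝ 2 u p) (hv : ContDiffAt ℝ 2 v p)
    (σ M : ℝ) :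
    aLap a (fun q ↦ σ * u q - M * v q) p = σ * aLap a u p - M * aLap a v p := by
  simp only [aLap, lap, D2_const_mul_sub_const_mul hu hv, Finset.sum_sub_distrib, ← Finset.mul_sum,
    fderiv_const_mul_sub_const_mul (hu.differentiableAt two_ne_zero)
      (hv.differentiableAt two_ne_zero)]
  ring

end AHarmonicOperator

namespace NormalDerivLimit

variable {a L K : ℝ} {w v : En n × ℝ → ℝ} {x : En n}

lemma nonpos_of_eventually_le (hL : NormalDerivLimit a w x L)
    (hd : ∀ᶠ y in 𝓝[>] (0 : ℝ), DifferentiableAt ℝ w (x, y))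
    (hc : ContinuousWithinAt (fun y : ℝ ↦ w (x, y)) (Ici 0) 0)
    (hmax : ∀ᶠ y in 𝓝[>] (0 : ℝ), w (x, y) ≤ w (x, 0)) : L ≤ 0 := by
  by_contra! hpos
  obtain ⟨ε, hε : 0 < ε, hsub⟩ := mem_nhdsGT_iff_exists_Ioc_subset.1
    ((hL.eventually_const_lt hpos).and (hd.and hmax))
  have hderiv : ∀ y ∈ Ioc 0 ε, HasDerivAt (fun y : ℝ ↦ w (x, y)) (fderiv ℝ w (x, y) (0, 1)) y :=
    fun y hy ↦ (hsub hy).2.1.hasFDerivAt.comp_hasDerivAt y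
      ((hasDerivAt_const y x).prodMk (hasDerivAt_id y))
  have hmono : StrictMonoOn (fun y : ℝ ↦ w (x, y)) (Icc 0 ε) := by
    refine strictMonoOn_of_deriv_pos (convex_Icc 0 ε) (fun y hy ↦ ?_) (fun y hy ↦ ?_)
    · rcases hy.1.eq_or_lt with rfl | hy0
      · exact hc.mono Icc_subset_Ici_self
      · exact (hderiv y ⟨hy0, hy.2⟩).continuousAt.continuousWithinAt
    · rw [interior_Icc] at hy
      have hy' : y ∈ Ioc 0 ε := Ioo_subset_Ioc_self hy
      rw [(hderiv y hy').deriv]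
      exact pos_of_mul_pos_right (hsub hy').1 (Real.rpow_nonneg hy.1.le a)
  exact (hmono (left_mem_Icc.2 hε.le) (right_mem_Icc.2 hε.le) hε).not_ge
    (hsub (right_mem_Ioc.2 hε)).2.2

lemma const_mul_sub_const_mul (hw : NormalDerivLimit a w x L) (hv : NormalDerivLimit a v x K)
    (hdw : ∀ᶠ y in 𝓝[>] (0 : ℝ), DifferentiableAt ℝ w (x, y))
    (hdv : ∀ᶠ y in 𝓝[>] (0 : ℝ), DifferentiableAt ℝ v (x, y)) (σ M : ℝ) :
    NormalDerivLimit a (fun q ↦ σ * w q - M * v q) x (σ * L - M * K) := by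
  refine (((hw.const_mul σ).sub (hv.const_mul M)).congr' ?_)
  filter_upwards [hdw, hdv] with y hwy hvy
  rw [fderiv_const_mul_sub_const_mul hwy hvy]
  ring

end NormalDerivLimit

section MaximumPrinciple

/-- The closed parabolic cylinder `[-1, 0] × closure (B_1^+)`. -/
def parabolicCylinder (n : ℕ) : Set (ℝ × (En n × ℝ)) :=
  Icc (-1) 0 ×ˢ closedHalfBall n 1

/-- The part of the boundary of the cylinder that carries data: the bottom
`{-1} × closure (B_1^+)` and the side `[-1, 0] × closure ((∂B_1)^+)`. The base `{y = 0}` is not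
included, because the dynamic boundary condition lives there. -/
def parabolicBoundary (n : ℕ) : Set (ℝ × (En n × ℝ)) :=
  {-1} ×ˢ closedHalfBall n 1 ∪ Icc (-1) 0 ×ˢ closedSpherePlus n

lemma isCompact_parabolicCylinder (n : ℕ) : IsCompact (parabolicCylinder n) :=
  isCompact_Icc.prod (isCompact_closedHalfBall n 1)

lemma parabolicBoundary_subset_parabolicCylinder (n : ℕ) :
    parabolicBoundary n ⊆ parabolicCylinder n :=
  union_subset (prod_mono (by simp) subset_rfl)
    (prod_mono subset_rfl (closedSpherePlus_subset_closedHalfBall n))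

lemma mem_base_or_halfBall_of_notMem_parabolicBoundary {t : ℝ} {p : En n × ℝ}
    (hmem : (t, p) ∈ parabolicCylinder n) (hnot : (t, p) ∉ parabolicBoundary n) :
    t ∈ Ioc (-1) 0 ∧ ((∃ x ∈ flatBall n 1, p = (x, 0)) ∨ p ∈ halfBall n 1) := by
  obtain ⟨ht, hp⟩ := hmem
  have htne : t ≠ -1 := fun h ↦ hnot (Or.inl ⟨h, hp⟩)
  have hpne : ‖p.1‖ ^ 2 + p.2 ^ 2 ≠ 1 ^ 2 := fun h ↦ hnot (Or.inr ⟨ht, by simpa using h, hp.2⟩)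
  have hplt : ‖p.1‖ ^ 2 + p.2 ^ 2 < 1 ^ 2 := hp.1.lt_of_ne hpne
  refine ⟨⟨ht.1.lt_of_ne' htne, ht.2⟩, ?_⟩
  rcases eq_or_lt_of_le (show 0 ≤ p.2 from hp.2) with hzero | hpos
  · have hx : ‖p.1‖ ^ 2 < 1 ^ 2 := by simpa [← hzero] using hplt
    exact Or.inl ⟨p.1, (sq_lt_sq₀ (norm_nonneg p.1) zero_le_one).1 hx, Prod.ext rfl hzero.symm⟩
  · exact Or.inr ⟨hplt, hpos⟩

/-- A classical strict subsolution of the localized fractional heat equation: `aLap a w > 0` in the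
half ball and `∂_t w < lim_{y → 0⁺} y^a ∂_y w` on the base. -/
structure IsStrictSubsolution (a : ℝ) (w : ℝ → En n × ℝ → ℝ) : Prop where
  continuousOn : ContinuousOn (fun q : ℝ × (En n × ℝ) ↦ w q.1 q.2) (parabolicCylinder n)
  contDiffOn : ∀ t ∈ Icc (-1 : ℝ) 0, ContDiffOn ℝ 2 (w t) (halfBall n 1)
  aLap_pos : ∀ t ∈ Icc (-1 : ℝ) 0, ∀ p ∈ halfBall n 1, 0 < aLap a (w t) p
  base : ∀ t ∈ Ioc (-1 : ℝ) 0, ∀ x ∈ flatBall n 1, ∃ d L : ℝ,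
    HasDerivWithinAt (fun τ ↦ w τ (x, 0)) d (Ioc (-1 : ℝ) 0) t ∧
      NormalDerivLimit a (w t) x L ∧ d < L

lemma continuousWithinAt_base {w : ℝ → En n × ℝ → ℝ} {t : ℝ} {x : En n}
    (hw : ContinuousOn (fun q : ℝ × (En n × ℝ) ↦ w q.1 q.2) (parabolicCylinder n))
    (ht : t ∈ Icc (-1 : ℝ) 0) (hx : x ∈ flatBall n 1) :
    ContinuousWithinAt (fun y : ℝ ↦ w t (x, y)) (Ici 0) 0 := by
  have hvert : Continuous fun y : ℝ ↦ (t, (x, y)) := by fun_prop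
  rw [← Ioi_insert, continuousWithinAt_insert_self]
  have hw0 : ContinuousWithinAt (fun q : ℝ × (En n × ℝ) ↦ w q.1 q.2) (parabolicCylinder n)
      (t, (x, 0)) := hw _ ⟨ht, zero_mem_closedHalfBall_of_mem_flatBall hx⟩
  refine hw0.tendsto.comp (tendsto_nhdsWithin_iff.2 ⟨hvert.continuousWithinAt.tendsto, ?_⟩)
  filter_upwards [eventually_mem_halfBall hx] with y hy
  exact ⟨ht, halfBall_subset_closedHalfBall n 1 hy⟩

lemma eventually_differentiableAt_base {w : En n × ℝ → ℝ} (hw : ContDiffOn ℝ 2 w (halfBall n 1))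
    {x : En n} (hx : x ∈ flatBall n 1) :
    ∀ᶠ y in 𝓝[>] (0 : ℝ), DifferentiableAt ℝ w (x, y) :=
  (eventually_mem_halfBall hx).mono fun _ hy ↦
    (hw.contDiffAt ((isOpen_halfBall n 1).mem_nhds hy)).differentiableAt two_ne_zero

namespace IsStrictSubsolution

variable {a t : ℝ} {w : ℝ → En n × ℝ → ℝ}

lemma not_isMaxOn_of_mem_halfBall (hw : IsStrictSubsolution a w) (ht : t ∈ Icc (-1 : ℝ) 0)
    {p : En n × ℝ} (hp : p ∈ halfBall n 1) :
    ¬ IsMaxOn (fun q : ℝ × (En n × ℝ) ↦ w q.1 q.2) (parabolicCylinder n) (t, p) := by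
  intro hmax
  have hnhds := (isOpen_halfBall n 1).mem_nhds hp
  have hlocal : IsLocalMax (w t) p := by
    filter_upwards [hnhds] with q hq
    exact hmax (show (t, q) ∈ parabolicCylinder n from
      ⟨ht, halfBall_subset_closedHalfBall n 1 hq⟩)
  exact (hw.aLap_pos t ht p hp).not_ge
    (aLap_nonpos_of_isLocalMax a ((hw.contDiffOn t ht).contDiffAt hnhds) hlocal)

lemma not_isMaxOn_of_mem_flatBall (hw : IsStrictSubsolution a w) (ht : t ∈ Ioc (-1 : ℝ) 0)
    {x : En n} (hx : x ∈ flatBall n 1) :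
    ¬ IsMaxOn (fun q : ℝ × (En n × ℝ) ↦ w q.1 q.2) (parabolicCylinder n) (t, (x, 0)) := by
  intro hmax
  have ht' : t ∈ Icc (-1 : ℝ) 0 := Ioc_subset_Icc_self ht
  obtain ⟨d, L, hd, hL, hdL⟩ := hw.base t ht x hx
  have hd_nonneg : 0 ≤ d := by
    obtain ⟨c, hc⟩ := exists_between ht.1
    refine nonneg_of_hasDerivWithinAt_of_isLocalMaxOn (convex_Ioc (-1) 0) ht
      ⟨hc.1, hc.2.le.trans ht.2⟩ hc.2 hd (IsMaxOn.localize fun τ hτ ↦ ?_)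
    exact hmax (show (τ, (x, (0 : ℝ))) ∈ parabolicCylinder n from
      ⟨Ioc_subset_Icc_self hτ, zero_mem_closedHalfBall_of_mem_flatBall hx⟩)
  have hL_nonpos : L ≤ 0 := by
    refine hL.nonpos_of_eventually_le (eventually_differentiableAt_base (hw.contDiffOn t ht') hx)
      (continuousWithinAt_base hw.continuousOn ht' hx) ?_
    filter_upwards [eventually_mem_halfBall hx] with y hy
    exact hmax (show (t, (x, y)) ∈ parabolicCylinder n from
      ⟨ht', halfBall_subset_closedHalfBall n 1 hy⟩)
  linarith

theorem le_of_le_on_parabolicBoundary (hw : IsStrictSubsolution a w) {m : ℝ}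
    (hbd : ∀ q ∈ parabolicBoundary n, w q.1 q.2 ≤ m) :
    ∀ q ∈ parabolicCylinder n, w q.1 q.2 ≤ m := by
  intro q hq
  obtain ⟨⟨t, p⟩, hmem, hmax⟩ :=
    (isCompact_parabolicCylinder n).exists_isMaxOn ⟨q, hq⟩ hw.continuousOn
  refine (hmax hq).trans (hbd (t, p) ?_)
  by_contra hnot
  obtain ⟨ht, ⟨x, hx, rfl⟩ | hp⟩ := mem_base_or_halfBall_of_notMem_parabolicBoundary hmem hnot
  · exact hw.not_isMaxOn_of_mem_flatBall ht hx hmax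
  · exact hw.not_isMaxOn_of_mem_halfBall (Ioc_subset_Icc_self ht) hp hmax

end IsStrictSubsolution

end MaximumPrinciple

section Barrier

/-- The parabolic size `|x - x₀|² + y^{2s} + (t + 1)` of the displacement from `(-1, x₀, 0)`. -/
def parabolicSize (s : ℝ) (x₀ : En n) (t : ℝ) (p : En n × ℝ) : ℝ :=
  ‖p.1 - x₀‖ ^ 2 + p.2 ^ (2 * s) + (t + 1)

/-- A function comparable with `parabolicSize s x₀` on the cylinder; for
`n < 2 * N * (1 - s)` it is a strict supersolution of the localized fractional heat equation. -/
def barrier (s N : ℝ) (x₀ : En n) (t : ℝ) (p : En n × ℝ) : ℝ :=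
  ‖p.1 - x₀‖ ^ 2 + (N + 1) * p.2 ^ (2 * s) - N * p.2 ^ 2 + 2 * (N + 1) * (t + 1)

variable {s N t : ℝ} {x₀ : En n} {p : En n × ℝ}

lemma snd_le_one_of_mem_closedHalfBall (hp : p ∈ closedHalfBall n 1) : p.2 ≤ 1 :=
  (sq_le_sq₀ hp.2 zero_le_one).1 (by linarith [hp.1, sq_nonneg ‖p.1‖])

lemma norm_fst_le_one_of_mem_closedHalfBall (hp : p ∈ closedHalfBall n 1) : ‖p.1‖ ≤ 1 :=
  (sq_le_sq₀ (norm_nonneg _) zero_le_one).1 (by linarith [hp.1, sq_nonneg p.2])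

lemma parabolicSize_nonneg (hq : (t, p) ∈ parabolicCylinder n) : 0 ≤ parabolicSize s x₀ t p := by
  have ht : 0 ≤ t + 1 := by linarith [hq.1.1]
  have hy : 0 ≤ p.2 ^ (2 * s) := Real.rpow_nonneg hq.2.2 _
  unfold parabolicSize
  positivity

lemma nonneg_of_cast_lt_two_mul_mul_one_sub (hs : s ≤ 1) (hN : n < 2 * N * (1 - s)) : 0 ≤ N := by
  have hpos : 0 < 2 * N * (1 - s) := n.cast_nonneg.trans_lt hN
  linarith [pos_of_mul_pos_left hpos (sub_nonneg.2 hs)]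

lemma parabolicSize_le_six (hs : 0 ≤ s) (hx₀ : x₀ ∈ flatBall n 1)
    (hq : (t, p) ∈ parabolicCylinder n) : parabolicSize s x₀ t p ≤ 6 := by
  obtain ⟨ht, hp⟩ := hq
  have hx : ‖p.1‖ ≤ 1 := norm_fst_le_one_of_mem_closedHalfBall hp
  have hx₀' : ‖x₀‖ ≤ 1 := le_of_lt hx₀
  have hsub : ‖p.1 - x₀‖ ≤ 2 := (norm_sub_le _ _).trans (by linarith)
  have hsq : ‖p.1 - x₀‖ ^ 2 ≤ 2 ^ 2 := pow_le_pow_left₀ (norm_nonneg _) hsub 2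
  have hy : p.2 ^ (2 * s) ≤ 1 :=
    Real.rpow_le_one hp.2 (snd_le_one_of_mem_closedHalfBall hp) (by positivity)
  unfold parabolicSize
  linarith [ht.2]

lemma sq_snd_le_rpow (hs : s ∈ Icc (0 : ℝ) 1) (hp : p ∈ closedHalfBall n 1) :
    p.2 ^ 2 ≤ p.2 ^ (2 * s) := by
  rw [← Real.rpow_two]
  exact Real.rpow_le_rpow_of_exponent_ge' hp.2 (snd_le_one_of_mem_closedHalfBall hp)
    (by linarith [hs.1]) (by linarith [hs.2])

lemma parabolicSize_le_barrier (hs : s ∈ Icc (0 : ℝ) 1) (hN : 0 ≤ N)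
    (hq : (t, p) ∈ parabolicCylinder n) : parabolicSize s x₀ t p ≤ barrier s N x₀ t p := by
  have hy := mul_le_mul_of_nonneg_left (sq_snd_le_rpow hs hq.2) hN
  have ht : 0 ≤ (2 * N + 1) * (t + 1) := mul_nonneg (by positivity) (by linarith [hq.1.1])
  unfold parabolicSize barrier
  linarith

lemma barrier_le_parabolicSize (hN : 0 ≤ N) (hp : 0 ≤ p.2) :
    barrier s N x₀ t p ≤ 2 * (N + 1) * parabolicSize s x₀ t p := by
  have hx : 0 ≤ (2 * N + 1) * ‖p.1 - x₀‖ ^ 2 := by positivity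
  have hy : 0 ≤ (N + 1) * p.2 ^ (2 * s) := by positivity
  have hy2 : 0 ≤ N * p.2 ^ 2 := by positivity
  unfold parabolicSize barrier
  linarith

lemma continuous_barrier (hs : 0 ≤ s) (N : ℝ) (x₀ : En n) :
    Continuous fun q : ℝ × (En n × ℝ) ↦ barrier s N x₀ q.1 q.2 := by
  have hy : Continuous fun q : ℝ × (En n × ℝ) ↦ q.2.2 ^ (2 * s) :=
    (Real.continuous_rpow_const (by positivity)).comp (by fun_prop)
  unfold barrier
  fun_prop

lemma contDiffAt_barrier (s N : ℝ) (x₀ : En n) (t : ℝ) (hp : 0 < p.2) :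
    ContDiffAt ℝ 2 (barrier s N x₀ t) p := by
  have hx : ContDiffAt ℝ 2 (fun q : En n × ℝ ↦ ‖q.1 - x₀‖ ^ 2) p :=
    (contDiffAt_fst.sub contDiffAt_const).norm_sq ℝ
  have hy : ContDiffAt ℝ 2 (fun q : En n × ℝ ↦ q.2 ^ (2 * s)) p :=
    contDiffAt_snd.rpow_const_of_ne hp.ne'
  unfold barrier
  fun_prop

lemma fderiv_barrier (s N : ℝ) (x₀ : En n) (t : ℝ) (hp : 0 < p.2) (e : En n × ℝ) :
    fderiv ℝ (barrier s N x₀ t) p e =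
      2 * ⟪p.1 - x₀, e.1⟫ + ((N + 1) * (2 * s * p.2 ^ (2 * s - 1)) - N * (2 * p.2)) * e.2 := by
  have hx : HasFDerivAt (fun q : En n × ℝ ↦ ‖q.1 - x₀‖ ^ 2) _ p :=
    (hasFDerivAt_fst.sub_const x₀).norm_sq
  have hy : HasFDerivAt (fun q : En n × ℝ ↦ q.2 ^ (2 * s)) _ p :=
    hasFDerivAt_snd.rpow_const (Or.inl hp.ne')
  have hsnd : HasFDerivAt (fun q : En n × ℝ ↦ q.2) (ContinuousLinearMap.snd ℝ (En n) ℝ) p :=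
    hasFDerivAt_snd
  have h : HasFDerivAt (barrier s N x₀ t) _ p :=
    ((hx.add (hy.const_mul (N + 1))).sub ((hsnd.pow 2).const_mul N)).add_const
      (2 * (N + 1) * (t + 1))
  simp only [h.fderiv, Nat.add_one_sub_one, pow_one, nsmul_eq_mul, Nat.cast_ofNat, sub_apply,
    add_apply, smul_apply, ContinuousLinearMap.comp_apply, ContinuousLinearMap.coe_fst',
    coe_innerSL_apply, ContinuousLinearMap.coe_snd', smul_eq_mul]
  ring

lemma D2_barrier (s N : ℝ) (x₀ : En n) (t : ℝ) (hp : 0 < p.2) (e : En n × ℝ) :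
    D2 (barrier s N x₀ t) p e = 2 * ‖e.1‖ ^ 2 +
      ((N + 1) * (2 * s * ((2 * s - 1) * p.2 ^ (2 * s - 1 - 1))) - N * 2) * e.2 ^ 2 := by
  have hfirst : (fun q ↦ fderiv ℝ (barrier s N x₀ t) q e) =ᶠ[𝓝 p] fun q ↦
      2 * ⟪q.1 - x₀, e.1⟫ + ((N + 1) * (2 * s * q.2 ^ (2 * s - 1)) - N * (2 * q.2)) * e.2 := by
    filter_upwards [continuous_snd.continuousAt.eventually_const_lt hp] with q hq
    exact fderiv_barrier s N x₀ t hq e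
  have hx : HasFDerivAt (fun q : En n × ℝ ↦ ⟪q.1 - x₀, e.1⟫) _ p :=
    (hasFDerivAt_fst.sub_const x₀).inner ℝ (hasFDerivAt_const e.1 p)
  have hy : HasFDerivAt (fun q : En n × ℝ ↦ q.2 ^ (2 * s - 1)) _ p :=
    hasFDerivAt_snd.rpow_const (Or.inl hp.ne')
  have h : HasFDerivAt (fun q : En n × ℝ ↦ 2 * ⟪q.1 - x₀, e.1⟫ +
      ((N + 1) * (2 * s * q.2 ^ (2 * s - 1)) - N * (2 * q.2)) * e.2) _ p :=
    (hx.const_mul 2).add ((((hy.const_mul (2 * s)).const_mul (N + 1)).sub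
      ((hasFDerivAt_snd.const_mul 2).const_mul N)).mul_const e.2)
  rw [D2, hfirst.fderiv_eq, h.fderiv]
  simp only [add_apply, smul_apply, ContinuousLinearMap.comp_apply,
    ContinuousLinearMap.prod_apply, ContinuousLinearMap.coe_fst', zero_apply, fderivInnerCLM_apply,
    inner_zero_right, real_inner_self_eq_norm_sq, zero_add, smul_eq_mul, sub_apply,
    ContinuousLinearMap.coe_snd']
  ring

lemma aLap_barrier (s N : ℝ) (x₀ : En n) (t : ℝ) (hp : 0 < p.2) :
    aLap (1 - 2 * s) (barrier s N x₀ t) p = 2 * (n - 2 * N * (1 - s)) := by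
  have hpow : p.2 ^ (2 * s - 1) = p.2 ^ (2 * s - 1 - 1) * p.2 := by
    rw [← Real.rpow_add_one hp.ne', sub_add_cancel]
  simp only [aLap, lap, D2_barrier s N x₀ t hp, fderiv_barrier s N x₀ t hp, hpow]
  simp only [PiLp.norm_single, norm_one, one_pow, mul_one, ne_eq, OfNat.ofNat_ne_zero,
    not_false_eq_true, zero_pow, mul_zero, add_zero, Finset.sum_const, Finset.card_univ,
    Fintype.card_fin, nsmul_eq_mul, norm_zero, zero_add, inner_zero_right]
  field_simp
  ring

lemma normalDerivLimit_barrier (hs : s < 1) (N : ℝ) (x₀ : En n) (t : ℝ) (x : En n) :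
    NormalDerivLimit (1 - 2 * s) (barrier s N x₀ t) x (2 * s * (N + 1)) := by
  have hcont : Continuous fun y : ℝ ↦ 2 * s * (N + 1) - 2 * N * y ^ (2 - 2 * s) := by
    have := Real.continuous_rpow_const (q := 2 - 2 * s) (by linarith)
    fun_prop
  have hlim : Tendsto (fun y : ℝ ↦ 2 * s * (N + 1) - 2 * N * y ^ (2 - 2 * s)) (𝓝[>] 0)
      (𝓝 (2 * s * (N + 1))) := by
    have h0 : (0 : ℝ) ^ (2 - 2 * s) = 0 := Real.zero_rpow (by linarith)
    simpa [h0] using (hcont.tendsto 0).mono_left nhdsWithin_le_nhds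
  refine hlim.congr' ?_
  filter_upwards [self_mem_nhdsWithin] with y (hy : 0 < y)
  have hflux : y ^ (1 - 2 * s) * y ^ (2 * s - 1) = 1 := by
    rw [← Real.rpow_add hy, show 1 - 2 * s + (2 * s - 1) = 0 by ring, Real.rpow_zero]
  have hsq : y ^ (2 - 2 * s) = y ^ (1 - 2 * s) * y := by
    rw [← Real.rpow_add_one hy.ne']; ring_nf
  rw [fderiv_barrier s N x₀ t hy, hsq, inner_zero_right]
  linear_combination (-(2 * s * (N + 1))) * hflux

lemma hasDerivAt_barrier_time (s N : ℝ) (x₀ : En n) (p : En n × ℝ) (t : ℝ) :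
    HasDerivAt (fun τ ↦ barrier s N x₀ τ p) (2 * (N + 1)) t := by
  unfold barrier
  simpa using (((hasDerivAt_id t).add_const 1).const_mul (2 * (N + 1))).const_add
    (‖p.1 - x₀‖ ^ 2 + (N + 1) * p.2 ^ (2 * s) - N * p.2 ^ 2)

end Barrier

namespace IsFracHeatSolution

variable {s N M : ℝ} {u : ℝ → En n × ℝ → ℝ}

lemma isStrictSubsolution_sub_barrier (hs : s ∈ Ico (0 : ℝ) 1)
    (hu : IsFracHeatSolution (1 - 2 * s) u) (hN : n < 2 * N * (1 - s)) (hM : 0 < M) (σ : ℝ)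
    (x₀ : En n) :
    IsStrictSubsolution (1 - 2 * s) fun t p ↦ σ * u t p - M * barrier s N x₀ t p := by
  obtain ⟨hcont, hharm, hbase⟩ := hu
  have hsmooth (t : ℝ) : ContDiffOn ℝ 2 (barrier s N x₀ t) (halfBall n 1) :=
    fun p hp ↦ (contDiffAt_barrier s N x₀ t hp.2).contDiffWithinAt
  refine ⟨?_, fun t ht ↦ ?_, fun t ht p hp ↦ ?_, fun t ht x hx ↦ ?_⟩
  · exact (continuousOn_const.mul hcont).sub
      (continuous_const.mul (continuous_barrier hs.1 N x₀)).continuousOn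
  · exact (contDiffOn_const.mul (hharm t ht).1).sub (contDiffOn_const.mul (hsmooth t))
  · have hu0 : aLap (1 - 2 * s) (u t) p = 0 := (hharm t ht).2 p hp
    rw [aLap_const_mul_sub_const_mul _
      ((hharm t ht).1.contDiffAt ((isOpen_halfBall n 1).mem_nhds hp))
      (contDiffAt_barrier s N x₀ t hp.2), hu0, aLap_barrier s N x₀ t hp.2]
    nlinarith
  · obtain ⟨hderiv, hflux⟩ := hbase t ht x hx
    refine ⟨_, _,
      (hderiv.hasDerivWithinAt.const_mul σ).sub
        ((hasDerivAt_barrier_time s N x₀ (x, 0) t).hasDerivWithinAt.const_mul M),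
      hflux.const_mul_sub_const_mul (normalDerivLimit_barrier hs.2 N x₀ t x)
        (eventually_differentiableAt_base (hharm t (Ioc_subset_Icc_self ht)).1 hx)
        (eventually_differentiableAt_base (hsmooth t) hx) σ M, ?_⟩
    have hN0 : 0 ≤ N := nonneg_of_cast_lt_two_mul_mul_one_sub hs.2.le hN
    have hspeed : M * (2 * s * (N + 1)) < M * (2 * (N + 1)) :=
      mul_lt_mul_of_pos_left (by nlinarith [hs.2, hN0]) hM
    linarith

lemma abs_sub_le_add_mul_barrier_of_pos (hs : s ∈ Ico (0 : ℝ) 1)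
    (hu : IsFracHeatSolution (1 - 2 * s) u) (hN : n < 2 * N * (1 - s)) (hM : 0 < M)
    {x₀ : En n} {U m : ℝ}
    (hbd : ∀ q ∈ parabolicBoundary n, |u q.1 q.2 - U| ≤ m + M * barrier s N x₀ q.1 q.2) :
    ∀ q ∈ parabolicCylinder n, |u q.1 q.2 - U| ≤ m + M * barrier s N x₀ q.1 q.2 := by
  intro q hq
  have hupper := (hu.isStrictSubsolution_sub_barrier hs hN hM 1 x₀).le_of_le_on_parabolicBoundary
    (m := m + U) (fun q hq ↦ by linarith [(abs_le.1 (hbd q hq)).2]) q hq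
  have hlower := (hu.isStrictSubsolution_sub_barrier hs hN hM (-1) x₀).le_of_le_on_parabolicBoundary
    (m := m - U) (fun q hq ↦ by linarith [(abs_le.1 (hbd q hq)).1]) q hq
  exact abs_le.2 ⟨by linarith, by linarith⟩

lemma abs_sub_le_add_mul_barrier (hs : s ∈ Ico (0 : ℝ) 1)
    (hu : IsFracHeatSolution (1 - 2 * s) u) (hN : n < 2 * N * (1 - s)) (hM : 0 ≤ M)
    {x₀ : En n} {U m : ℝ}
    (hbd : ∀ q ∈ parabolicBoundary n, |u q.1 q.2 - U| ≤ m + M * barrier s N x₀ q.1 q.2) :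
    ∀ q ∈ parabolicCylinder n, |u q.1 q.2 - U| ≤ m + M * barrier s N x₀ q.1 q.2 := by
  intro q hq
  have hN0 : 0 ≤ N := nonneg_of_cast_lt_two_mul_mul_one_sub hs.2.le hN
  have hperturbed : ∀ M' > M, |u q.1 q.2 - U| ≤ m + M' * barrier s N x₀ q.1 q.2 := by
    refine fun M' hM' ↦ hu.abs_sub_le_add_mul_barrier_of_pos hs hN (hM.trans_lt hM')
      (fun r hr ↦ (hbd r hr).trans ?_) q hq
    have hr' := parabolicBoundary_subset_parabolicCylinder n hr
    have hbarrier : 0 ≤ barrier s N x₀ r.1 r.2 :=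
      (parabolicSize_nonneg hr').trans (parabolicSize_le_barrier ⟨hs.1, hs.2.le⟩ hN0 hr')
    gcongr
  have hcont : Continuous fun M' : ℝ ↦ m + M' * barrier s N x₀ q.1 q.2 := by fun_prop
  exact ge_of_tendsto ((hcont.tendsto M).mono_left nhdsWithin_le_nhds)
    (eventually_mem_nhdsWithin (s := Ioi M) |>.mono hperturbed)

end IsFracHeatSolution

section GrowthEstimate

lemma rpow_le_rpow_add_rpow_sub_one_mul {R ρ α : ℝ} (hR : 0 ≤ R) (hρ : 0 < ρ)
    (hα : α ∈ Icc (0 : ℝ) 1) : R ^ α ≤ ρ ^ α + ρ ^ (α - 1) * R := by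
  have hsum : 0 < ρ + R := by positivity
  calc R ^ α ≤ (ρ + R) ^ α := Real.rpow_le_rpow hR (by linarith) hα.1
    _ = (ρ + R) ^ (α - 1) * (ρ + R) := by rw [← Real.rpow_add_one hsum.ne', sub_add_cancel]
    _ ≤ ρ ^ (α - 1) * (ρ + R) :=
      mul_le_mul_of_nonneg_right
        (Real.rpow_le_rpow_of_nonpos hρ (by linarith) (by linarith [hα.2])) hsum.le
    _ = ρ ^ α + ρ ^ (α - 1) * R := by
      rw [mul_add, ← Real.rpow_add_one hρ.ne', sub_add_cancel]

lemma rpow_le_rpow_mul_rpow_of_le {ρ B α β : ℝ} (hρ : 0 ≤ ρ) (hB : ρ ≤ B)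
    (hβ : β ∈ Icc (0 : ℝ) α) : ρ ^ α ≤ B ^ (α - β) * ρ ^ β := by
  calc ρ ^ α = ρ ^ (α - β) * ρ ^ β := by
        rw [← Real.rpow_add_of_nonneg hρ (sub_nonneg.2 hβ.2) hβ.1, sub_add_cancel]
    _ ≤ B ^ (α - β) * ρ ^ β := by
        gcongr
        exact sub_nonneg.2 hβ.2

variable {s N α C₀ U : ℝ} {u : ℝ → En n × ℝ → ℝ} {x₀ : En n}

theorem IsFracHeatSolution.abs_sub_le_mul_parabolicSize_rpow (hs : s ∈ Ico (0 : ℝ) 1)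
    (hu : IsFracHeatSolution (1 - 2 * s) u) (hN : n < 2 * N * (1 - s)) (hα : α ∈ Icc (0 : ℝ) 1)
    (hC₀ : 0 ≤ C₀)
    (hbd : ∀ q ∈ parabolicBoundary n, |u q.1 q.2 - U| ≤ C₀ * parabolicSize s x₀ q.1 q.2 ^ α) :
    ∀ q ∈ parabolicCylinder n,
      |u q.1 q.2 - U| ≤ (2 * N + 3) * C₀ * parabolicSize s x₀ q.1 q.2 ^ α := by
  intro q hq
  have hN0 : 0 ≤ N := nonneg_of_cast_lt_two_mul_mul_one_sub hs.2.le hN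
  set ρ := parabolicSize s x₀ q.1 q.2 with hρ_def
  have hρ_nonneg : 0 ≤ ρ := parabolicSize_nonneg hq
  rcases hq.1.1.eq_or_lt with hbottom | hlater
  · have hC₀ρ : 0 ≤ (2 * N + 2) * (C₀ * ρ ^ α) := by positivity
    linarith [hbd q (Or.inl ⟨hbottom.symm, hq.2⟩)]
  have hρ : 0 < ρ := by
    have hy : 0 ≤ q.2.2 ^ (2 * s) := Real.rpow_nonneg hq.2.2 _
    rw [hρ_def, parabolicSize]
    linarith [sq_nonneg ‖q.2.1 - x₀‖]
  have hM : 0 ≤ C₀ * ρ ^ (α - 1) := by positivity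
  have hbd_barrier : ∀ r ∈ parabolicBoundary n,
      |u r.1 r.2 - U| ≤ C₀ * ρ ^ α + C₀ * ρ ^ (α - 1) * barrier s N x₀ r.1 r.2 := by
    intro r hr
    have hr' := parabolicBoundary_subset_parabolicCylinder n hr
    calc |u r.1 r.2 - U| ≤ C₀ * parabolicSize s x₀ r.1 r.2 ^ α := hbd r hr
      _ ≤ C₀ * (ρ ^ α + ρ ^ (α - 1) * parabolicSize s x₀ r.1 r.2) := by
        gcongr
        exact rpow_le_rpow_add_rpow_sub_one_mul (parabolicSize_nonneg hr') hρ hα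
      _ = C₀ * ρ ^ α + C₀ * ρ ^ (α - 1) * parabolicSize s x₀ r.1 r.2 := by ring
      _ ≤ C₀ * ρ ^ α + C₀ * ρ ^ (α - 1) * barrier s N x₀ r.1 r.2 := by
        gcongr
        exact parabolicSize_le_barrier ⟨hs.1, hs.2.le⟩ hN0 hr'
  calc |u q.1 q.2 - U| ≤ C₀ * ρ ^ α + C₀ * ρ ^ (α - 1) * barrier s N x₀ q.1 q.2 :=
        hu.abs_sub_le_add_mul_barrier hs hN hM hbd_barrier q hq
    _ ≤ C₀ * ρ ^ α + C₀ * ρ ^ (α - 1) * (2 * (N + 1) * ρ) := by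
      gcongr
      exact barrier_le_parabolicSize hN0 hq.2.2
    _ = (2 * N + 3) * C₀ * ρ ^ α := by
      rw [← sub_add_cancel α 1, Real.rpow_add_one hρ.ne', add_sub_cancel_right]
      ring

theorem fhe_regularity_bottom_boundary_general (n : ℕ) {s α β : ℝ} (hs : s ∈ Ioo (0 : ℝ) 1)
    (hα : α ∈ Icc (0 : ℝ) 1) (hβ : β ∈ Icc 0 α) :
    ∃ C > 0, ∀ (u : ℝ → En n × ℝ → ℝ) (x₀ : En n) (C₀ : ℝ),
      IsFracHeatSolution (1 - 2 * s) u →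
      x₀ ∈ flatBall n 1 → 0 ≤ C₀ →
      (∀ (t : ℝ) (p : En n × ℝ),
        ((t = -1 ∧ p ∈ closedHalfBall n 1) ∨ (t ∈ Icc (-1 : ℝ) 0 ∧ p ∈ closedSpherePlus n)) →
        |u t p - u (-1) (x₀, 0)| ≤ C₀ * (‖p.1 - x₀‖ ^ 2 + p.2 ^ (2 * s) + (t + 1)) ^ α) →
      ∀ t ∈ Icc (-1 : ℝ) 0, ∀ p ∈ closedHalfBall n 1,
        |u t p - u (-1) (x₀, 0)| ≤
          C * C₀ * (‖p.1 - x₀‖ ^ 2 + p.2 ^ (2 * s) + (t + 1)) ^ β := by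
  have hs1 : 0 < 1 - s := sub_pos.2 hs.2
  obtain ⟨N, hN0, hN⟩ : ∃ N : ℝ, 0 ≤ N ∧ n < 2 * N * (1 - s) :=
    ⟨(n + 1) / (2 * (1 - s)), by positivity, by field_simp; linarith⟩
  refine ⟨(2 * N + 3) * 6 ^ (α - β), by positivity, fun u x₀ C₀ hu hx₀ hC₀ hbd t ht p hp ↦ ?_⟩
  have hq : (t, p) ∈ parabolicCylinder n := ⟨ht, hp⟩
  calc |u t p - u (-1) (x₀, 0)| ≤ (2 * N + 3) * C₀ * parabolicSize s x₀ t p ^ α :=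
        hu.abs_sub_le_mul_parabolicSize_rpow (Ioo_subset_Ico_self hs) hN hα hC₀
          (fun q hq ↦ hbd q.1 q.2 hq) (t, p) hq
    _ ≤ (2 * N + 3) * C₀ * (6 ^ (α - β) * parabolicSize s x₀ t p ^ β) := by
      gcongr
      exact rpow_le_rpow_mul_rpow_of_le (parabolicSize_nonneg hq)
        (parabolicSize_le_six hs.1.le hx₀ hq) hβ
    _ = (2 * N + 3) * 6 ^ (α - β) * C₀ * parabolicSize s x₀ t p ^ β := by ring

end GrowthEstimate

/-- **Lemma 4.5 (continuity at the initial time).** If a solution of the localized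
fractional heat equation separates from its value at `(-1, x₀, 0)`, `x₀ ∈ B_1^0`, at most
like `C₀ (|x-x₀|² + y^{1-a} + (t+1))^α` on the parabolic boundary, then it separates at
most like `C C₀ (|x-x₀|² + y^{1-a} + (t+1))^{sα/2}` everywhere (here `1-a = 2s`). -/
theorem fhe_regularity_bottom_boundary (n : ℕ) (hn : 1 ≤ n) (s : ℝ)
    (hs : s ∈ Ioo (0 : ℝ) (1/2)) (α : ℝ) (hα : α ∈ Ioc (0 : ℝ) 1) :
    ∃ C > 0, ∀ (u : ℝ → En n × ℝ → ℝ) (x₀ : En n) (C₀ : ℝ),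
      IsFracHeatSolution (1 - 2*s) u →
      x₀ ∈ flatBall n 1 → 0 ≤ C₀ →
      (∀ (t : ℝ) (p : En n × ℝ),
        ((t = -1 ∧ p ∈ closedHalfBall n 1) ∨ (t ∈ Icc (-1 : ℝ) 0 ∧ p ∈ closedSpherePlus n)) →
        |u t p - u (-1) (x₀, 0)| ≤ C₀ * (‖p.1 - x₀‖^2 + p.2 ^ (2*s) + (t + 1)) ^ α) →
      ∀ t ∈ Icc (-1 : ℝ) 0, ∀ p ∈ closedHalfBall n 1,
        |u t p - u (-1) (x₀, 0)| ≤
          C * C₀ * (‖p.1 - x₀‖^2 + p.2 ^ (2*s) + (t + 1)) ^ (s * α / 2) :=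
  fhe_regularity_bottom_boundary_general n ⟨hs.1, by linarith [hs.2]⟩ ⟨hα.1.le, hα.2⟩
    ⟨by nlinarith [hs.1, hα.1], by nlinarith [hs.2, hα.1]⟩

end
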